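/- arXiv:2311.15833 — 3 statements merged into one kernel-verified Lean document; each statement's English description precedes it below -/
import Mathlib

section
/- Let λ, p, q, r, P, Q, S be real numbers with p·q − r² = 1 and p·Q + q·P = 2·r·S. Define the 2×2 real matrices G := [[p, r], [r, q]] and A := [[P + 2λp, S], [S, Q − 2λq]]. Then the trace of A·G⁻¹·A·G⁻¹ equals 8·(r² + 1)·λ² + 8·(r·S − p·Q)·λ + 2·(S² − P·Q). -/
/-- Chern–Hamilton energy density identity: for reals with `p*q - r² = 1` and
`p*Q + q*P = 2*r*S`, with `G = [[p,r],[r,q]]` and `A = [[P+2λp, S],[S, Q-2λq]]`,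
one has `tr(A G⁻¹ A G⁻¹) = 8(r²+1)λ² + 8(rS - pQ)λ + 2(S² - PQ)`. -/
theorem chern_hamilton_energy_density (l p q r P Q S : ℝ)
    (h1 : p * q - r ^ 2 = 1) (h2 : p * Q + q * P = 2 * r * S)
    (G A : Matrix (Fin 2) (Fin 2) ℝ)
    (hG : G = !![p, r; r, q])
    (hA : A = !![P + 2 * l * p, S; S, Q - 2 * l * q]) :
    (A * G⁻¹ * A * G⁻¹).trace =
      8 * (r ^ 2 + 1) * l ^ 2 + 8 * (r * S - p * Q) * l + 2 * (S ^ 2 - P * Q) := by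
  have hdet : G.det = 1 := by
    rw [hG, Matrix.det_fin_two_of]
    linear_combination h1
  have hinv : G⁻¹ = !![q, -r; -r, p] := by
    rw [Matrix.inv_def, hdet, hG, Matrix.adjugate_fin_two_of]
    simp
  rw [hinv, hA]
  simp only [Matrix.mul_fin_two, Matrix.trace_fin_two_of]
  -- With `M = A * G⁻¹`, Cayley–Hamilton gives `tr M² = (tr M)² - 2 det M`. Here
  -- `tr M = p * Q + q * P - 2 * r * S` vanishes by `h2`, and `det M = det A` by `h1`; the
  -- two terms in `l` rewrite `-2 * det A` into the stated form.
  linear_combination (p * Q + q * P - 2 * r * S + 4 * l) * h2 +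
    (8 * l ^ 2 - 2 * ((P + 2 * l * p) * (Q - 2 * l * q) - S ^ 2)) * h1
end

section
/- Let λ, p, q, r, P, Q, S be real numbers with p > 0, p·q − r² = 1 and p·Q + q·P = 2·r·S. Define G := [[p, r], [r, q]] and A := [[P + 2λp, S], [S, Q − 2λq]]. Then trace(A·G⁻¹·A·G⁻¹) ≥ 8·λ² + 8·λ·(P/p), and equality holds if and only if P = 0 and S = 2·r·λ. -/
/-!
Since `det G = 1`, the constraint `p*Q + q*P = 2*r*S` says exactly that `B = A * G⁻¹` is traceless, so
`tr (B * B) = -2 * det B = -2 * det A`. Eliminating `q` and `Q`, this equals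
`8 * l ^ 2 + 8 * l * (P / p) + 2 * (P / p) ^ 2 + 2 * (S - r * (P / p) - 2 * r * l) ^ 2`,
from which both the inequality and its equality case are read off.
-/

/-- Pointwise energy inequality: for `p > 0`, `p*q - r² = 1`, `p*Q + q*P = 2*r*S`,
with `G = [[p,r],[r,q]]` and `A = [[P+2λp, S],[S, Q-2λq]]`, one has
`tr(A G⁻¹ A G⁻¹) ≥ 8λ² + 8λ(P/p)`, with equality iff `P = 0` and `S = 2rλ`. -/
theorem energy_density_inequality (l p q r P Q S : ℝ) (hp : 0 < p)
    (h1 : p * q - r ^ 2 = 1) (h2 : p * Q + q * P = 2 * r * S)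
    (G A : Matrix (Fin 2) (Fin 2) ℝ)
    (hG : G = !![p, r; r, q])
    (hA : A = !![P + 2 * l * p, S; S, Q - 2 * l * q]) :
    8 * l ^ 2 + 8 * l * (P / p) ≤ (A * G⁻¹ * A * G⁻¹).trace ∧
    ((A * G⁻¹ * A * G⁻¹).trace = 8 * l ^ 2 + 8 * l * (P / p) ↔
      P = 0 ∧ S = 2 * r * l) := by
  have hdet : G.det = 1 := by
    rw [hG, Matrix.det_fin_two_of]
    linarith
  have hinv : G⁻¹ = !![q, -r; -r, p] := by
    rw [Matrix.inv_def, hdet, hG, Matrix.adjugate_fin_two_of]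
    simp
  have key : (A * G⁻¹ * A * G⁻¹).trace =
      8 * l ^ 2 + 8 * l * (P / p) +
        (2 * (P / p) ^ 2 + 2 * (S - r * (P / p) - 2 * r * l) ^ 2) := by
    have hp' : p ≠ 0 := hp.ne'
    have hq : q = (1 + r ^ 2) / p := by
      rw [eq_div_iff hp']
      linarith
    have hQ : Q = (2 * r * S - q * P) / p := by
      rw [eq_div_iff hp']
      linarith
    rw [hinv, hA, Matrix.trace_fin_two]
    simp only [Matrix.mul_fin_two, Matrix.of_apply, Matrix.cons_val', Matrix.cons_val_zero,
      Matrix.cons_val_one, Matrix.cons_val_fin_one]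
    rw [hQ, hq]
    field_simp
    ring
  rw [key]
  refine ⟨by linarith [sq_nonneg (P / p), sq_nonneg (S - r * (P / p) - 2 * r * l)], ?_, ?_⟩
  · intro h
    have hu : P / p = 0 := by
      apply pow_eq_zero_iff (two_ne_zero) |>.mp
      linarith [sq_nonneg (P / p), sq_nonneg (S - r * (P / p) - 2 * r * l)]
    have hS : S - r * (P / p) - 2 * r * l = 0 := by
      apply pow_eq_zero_iff (two_ne_zero) |>.mp
      linarith [sq_nonneg (P / p), sq_nonneg (S - r * (P / p) - 2 * r * l)]
    rw [hu] at hS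
    exact ⟨(div_eq_zero_iff.mp hu).resolve_right hp.ne', by linarith⟩
  · rintro ⟨rfl, rfl⟩
    simp
end

section
/- Let (X, 𝒜, μ) be a finite measure space, let λ be a real number, and let u, r, S : X → ℝ be measurable functions such that u is integrable with ∫ u dμ = 0 and such that the function F := (r² + 1)·λ² + ((r² + 1)·u − r·S)·λ + (1/4)·(r·u − S)² + (1/4)·u² is integrable. Then ∫ F dμ ≥ λ² · μ(X). -/
open MeasureTheory

/-- Integrated energy comparison: on a finite measure space, if `u` is integrable with
`∫ u dμ = 0` and `F = (r²+1)λ² + ((r²+1)u - rS)λ + ¼(ru - S)² + ¼u²` is integrable,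
then `∫ F dμ ≥ λ² · μ(X)`. -/
theorem integrated_energy_comparison {X : Type*} [MeasurableSpace X]
    (μ : Measure X) [IsFiniteMeasure μ] (l : ℝ) (u r S : X → ℝ)
    (hu : Measurable u) (hr : Measurable r) (hS : Measurable S)
    (hui : Integrable u μ) (hu0 : ∫ x, u x ∂μ = 0)
    (F : X → ℝ)
    (hF : F = fun x => (r x ^ 2 + 1) * l ^ 2 + ((r x ^ 2 + 1) * u x - r x * S x) * l
      + (1 / 4) * (r x * u x - S x) ^ 2 + (1 / 4) * u x ^ 2)
    (hFi : Integrable F μ) :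
    l ^ 2 * (μ Set.univ).toReal ≤ ∫ x, F x ∂μ := by
  -- Completing the square: `F = l² + l u + (r l + (r u - S) / 2)² + u² / 4`.
  have hpt : ∀ x, l ^ 2 + l * u x ≤ F x := by
    intro x
    rw [hF]
    nlinarith [sq_nonneg (r x * l + (r x * u x - S x) / 2), sq_nonneg (u x)]
  have hint : ∫ x, (l ^ 2 + l * u x) ∂μ = l ^ 2 * (μ Set.univ).toReal := by
    rw [integral_add (integrable_const _) (hui.const_mul l), integral_const_mul, hu0,
      integral_const, smul_eq_mul, Measure.real]
    ring
  rw [← hint]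
  exact integral_mono ((integrable_const _).add (hui.const_mul l)) hFi hpt
end
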